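/- arXiv:2207.06365 — 3 statements merged into one kernel-verified Lean document; each statement's English description precedes it below -/
import Mathlib

section
/- Let t ≥ 2 and let k = mt − 1 for some integer m ≥ 1, with k ≥ 2. If k ≤ (π²/6 + 5/(2t))^{-1} · (t² − 1), then for all sufficiently large n, D_k^×(t,t;n) > D_k^×(t−1,t;n); that is, parts divisible by t are eventually more numerous than parts congruent to t−1 mod t among k-indivisible partitions of n. -/
/-!
Write `p(n)` for the number of `k`-regular partitions of `n` (no part divisible by `k`) and
`q(n) = p(n) - p(n - 1)`. A `k`-regular partition of `n` contains the part `j` at least `i` times in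
`p(n - i j)` ways, so summation by parts gives `D(r; n) = ∑_{M ≤ n} q(M) F_r(n - M)`, where
`F_r(x) = ∑ ⌊x / j⌋` over `j ≡ r (mod t)` with `k ∤ j` (`Dkx_eq`). Since `k ≥ 2`, adding a part `1`
shows `q ≥ 0`.

Because `k ≡ -1 (mod t)`, the function `F_t - F_{t-1}` equals
`∑_{i ≥ 0} (⌊x / (k(ti + 1))⌋ - ⌊x / (kt(i + 1))⌋) - ∑_{i ≥ 0} (⌊x / (ti + t - 1)⌋ - ⌊x / (ti + t)⌋)`,
all of whose brackets are nonnegative. Cutting both sums at a fixed `I` gives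
`F_t(x) - F_{t-1}(x) ≥ δ x - 2I` (`le_classSum_diff`), and for large `I` the slope `δ` is positive:
the second series of reciprocals is at most `π²/(6t²) + (5/4)/(t²(t - 1))`, the first is at least
`(1 - 2/(t(t + 1)))/k`, and the bound on `k` makes the latter larger when `t ≥ 3` (`main_ineq`). For
`t = 2` no `k ≥ 2` satisfies the bound.

Inserting this, the difference of the two part counts is at least
`δ ∑_{N < n} p(N) - 2I p(n)`, and it remains to see that `∑_{N < n} p(N)` eventually exceeds
any given multiple of `p(n)` (`eventually_mul_regCount_le`). Removing one part shows that this sum is at least the total number of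
distinct part sizes over all `k`-regular partitions of `n`. The partitions with fewer than `s`
sizes number at most `s (n + 1)^(2s)`, while `p(n)` grows at least like `2^√(n/(k + 1))`, so the
average number of sizes tends to infinity.
-/

open scoped Real

/-- `Dkx k t r n` is the number of parts congruent to `r` mod `t`, counted with
multiplicity, among all partitions of `n` into parts not divisible by `k`. -/
noncomputable def Dkx (k t r n : ℕ) : ℕ :=
  ∑ p : n.Partition,
    if ∀ i ∈ p.parts, ¬ k ∣ i then (p.parts.filter (fun i => i % t = r % t)).card else 0


/-! ### Counting parts through the number of `k`-regular partitions -/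

open Finset in
/-- The number of `k`-regular partitions of `n`, that is, partitions without a part divisible
by `k`. -/
noncomputable def regCount (k n : ℕ) : ℕ :=
  #{p : n.Partition | ∀ i ∈ p.parts, ¬ k ∣ i}

open Finset in
/-- Adding `i` copies of `j` is a bijection from the `k`-regular partitions of `n - i * j` onto the
`k`-regular partitions of `n` that contain `j` at least `i` times. -/
theorem card_count_ge {k j i n : ℕ} (hk : ¬ k ∣ j) (hj : 0 < j) (h : i * j ≤ n) :
    #{p : n.Partition | (∀ a ∈ p.parts, ¬ k ∣ a) ∧ i ≤ p.parts.count j}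
      = regCount k (n - i * j) := by
  symm
  unfold regCount
  refine Finset.card_bij
    (fun p _ => ⟨p.parts + Multiset.replicate i j, ?_, ?_⟩) ?_ ?_ ?_
  · intro a ha
    rcases Multiset.mem_add.1 ha with ha | ha
    · exact p.parts_pos ha
    · rw [Multiset.eq_of_mem_replicate ha]; exact hj
  · rw [Multiset.sum_add, p.parts_sum, Multiset.sum_replicate, smul_eq_mul]; omega
  · intro p hp
    simp only [mem_filter, mem_univ, true_and] at hp ⊢
    refine ⟨fun a ha => ?_, ?_⟩
    · rcases Multiset.mem_add.1 ha with ha | ha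
      · exact hp a ha
      · rw [Multiset.eq_of_mem_replicate ha]; exact hk
    · simp
  · intro p _ ρ _ he
    have := congrArg Nat.Partition.parts he
    exact Nat.Partition.ext (by simpa using this)
  · intro ρ hρ
    simp only [mem_filter, mem_univ, true_and] at hρ
    have hle : Multiset.replicate i j ≤ ρ.parts := Multiset.le_count_iff_replicate_le.1 hρ.2
    have hadd := Multiset.sub_add_cancel hle
    refine ⟨⟨ρ.parts - Multiset.replicate i j, ?_, ?_⟩, ?_, ?_⟩
    · intro a ha
      exact ρ.parts_pos (Multiset.mem_of_le (Multiset.sub_le_self _ _) ha)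
    · have := congrArg Multiset.sum hadd
      rw [Multiset.sum_add, ρ.parts_sum, Multiset.sum_replicate, smul_eq_mul] at this
      omega
    · simp only [mem_filter, mem_univ, true_and]
      intro a ha
      exact hρ.1 a (Multiset.mem_of_le (Multiset.sub_le_self _ _) ha)
    · exact Nat.Partition.ext hadd

/-- Adding a part `1`, which `k ≥ 2` does not divide, is injective. -/
theorem regCount_le_succ {k : ℕ} (hk : 2 ≤ k) (n : ℕ) :
    regCount k n ≤ regCount k (n + 1) := by
  have h := card_count_ge (k := k) (j := 1) (i := 1) (n := n + 1)
    (by intro h; have := Nat.le_of_dvd one_pos h; omega) one_pos (by omega)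
  simp only [mul_one, Nat.add_sub_cancel] at h
  rw [← h]
  refine Finset.card_le_card fun p hp => ?_
  simp only [Finset.mem_filter, Finset.mem_univ, true_and] at hp ⊢
  exact hp.1

/-- The difference `regCount k n - regCount k (n - 1)`, with `regCount k (-1)` read as `0`. The
subtraction does not truncate when `2 ≤ k`, by `regCount_le_succ`. -/
noncomputable def regDiff (k : ℕ) : ℕ → ℕ
  | 0 => regCount k 0
  | n + 1 => regCount k (n + 1) - regCount k n

open Finset in
theorem sum_regDiff {k : ℕ} (hk : 2 ≤ k) (n : ℕ) :
    ∑ M ∈ range (n + 1), regDiff k M = regCount k n := by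
  induction n with
  | zero => simp [regDiff]
  | succ n ih =>
    rw [sum_range_succ, ih, regDiff]
    have := regCount_le_succ hk n
    omega

open Finset in
theorem regCount_sub {k : ℕ} (hk : 2 ≤ k) {n N : ℕ} (h : N ≤ n) :
    regCount k (n - N) = ∑ M ∈ range (n + 1), if N + M ≤ n then regDiff k M else 0 := by
  rw [← sum_regDiff hk, ← sum_filter]
  refine sum_congr ?_ fun _ _ => rfl
  ext M; simp only [mem_range, mem_filter]; omega

open Finset in
/-- The summatory function `∑ ⌊x / j⌋` over the `j ≡ r (mod t)` that are not divisible by `k`; it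
counts the pairs `(j, i)` with `i ≥ 1` and `i * j ≤ x`. -/
def classSum (k t r x : ℕ) : ℕ :=
  ∑ j ∈ Icc 1 x with j % t = r % t ∧ ¬ k ∣ j, x / j

open Finset in
/-- The range of `j` may be enlarged, since `⌊x / j⌋ = 0` for `j > x`. -/
theorem classSum_eq {k t r x X : ℕ} (h : x ≤ X) :
    classSum k t r x = ∑ j ∈ Icc 1 X with j % t = r % t ∧ ¬ k ∣ j, x / j := by
  unfold classSum
  refine sum_subset (fun j => ?_) fun j hj hj' => ?_
  · simp only [mem_filter, mem_Icc]; omega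
  · simp only [mem_filter, mem_Icc] at hj hj'
    exact Nat.div_eq_of_lt (by by_contra hc; exact hj' ⟨⟨hj.1.1, by omega⟩, hj.2⟩)

open Finset in
theorem card_parts_filter {k t r n : ℕ} (p : n.Partition) (hp : ∀ i ∈ p.parts, ¬ k ∣ i) :
    (p.parts.filter (fun i => i % t = r % t)).card
      = ∑ j ∈ Icc 1 n with j % t = r % t ∧ ¬ k ∣ j,
          ∑ i ∈ Icc 1 (n / j), if i ≤ p.parts.count j then 1 else 0 := by
  have hsub : ∀ a ∈ p.parts.filter (fun i => i % t = r % t),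
      a ∈ (Icc 1 n).filter (fun j => j % t = r % t ∧ ¬ k ∣ j) := by
    intro a ha
    rw [Multiset.mem_filter] at ha
    simp only [mem_filter, mem_Icc]
    refine ⟨⟨p.parts_pos ha.1, ?_⟩, ha.2, hp a ha.1⟩
    exact (Multiset.le_sum_of_mem ha.1).trans_eq p.parts_sum
  rw [← Multiset.sum_count_eq_card hsub]
  refine sum_congr rfl fun j hj => ?_
  simp only [mem_filter, mem_Icc] at hj
  rw [Multiset.count_filter_of_pos (p := fun i => i % t = r % t) hj.2.1, ← sum_filter, sum_const, smul_eq_mul, mul_one]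
  have hle : p.parts.count j ≤ n / j := by
    rw [Nat.le_div_iff_mul_le hj.1.1]
    have h1 : Multiset.replicate (p.parts.count j) j ≤ p.parts :=
      Multiset.le_count_iff_replicate_le.1 le_rfl
    obtain ⟨u, hu⟩ := Multiset.le_iff_exists_add.1 h1
    have := congrArg Multiset.sum hu
    rw [Multiset.sum_add, p.parts_sum, Multiset.sum_replicate, smul_eq_mul] at this
    omega
  have : (Icc 1 (n / j)).filter (fun i => i ≤ p.parts.count j) = Icc 1 (p.parts.count j) := by
    ext i; simp only [mem_filter, mem_Icc]; omega
  rw [this, Nat.card_Icc, Nat.add_sub_cancel]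

open Finset in
/-- Abel summation in the number of parts: the weights `regDiff k M` are nonnegative and do not
depend on the residue class. -/
theorem Dkx_eq {k : ℕ} (hk : 2 ≤ k) (t r n : ℕ) :
    Dkx k t r n = ∑ M ∈ range (n + 1), regDiff k M * classSum k t r (n - M) := by
  have h1 : Dkx k t r n = ∑ j ∈ Icc 1 n with j % t = r % t ∧ ¬ k ∣ j,
      ∑ i ∈ Icc 1 (n / j), regCount k (n - i * j) := by
    unfold Dkx
    rw [← sum_filter, sum_congr rfl fun p hp =>
      card_parts_filter (k := k) (t := t) (r := r) p (by simpa using hp), sum_comm]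
    refine sum_congr rfl fun j hj => ?_
    simp only [mem_filter, mem_Icc] at hj
    rw [sum_comm]
    refine sum_congr rfl fun i hi => ?_
    rw [mem_Icc, Nat.le_div_iff_mul_le hj.1.1] at hi
    rw [← card_count_ge hj.2.2 hj.1.1 hi.2, ← sum_filter, filter_filter, sum_const, smul_eq_mul,
      mul_one]
  rw [h1]
  simp_rw [mul_comm (regDiff k _)]
  have h2 : ∀ M ∈ range (n + 1), classSum k t r (n - M) * regDiff k M
      = ∑ j ∈ Icc 1 n with j % t = r % t ∧ ¬ k ∣ j, (n - M) / j * regDiff k M := fun M _ => by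
    rw [classSum_eq (Nat.sub_le n M), sum_mul]
  rw [sum_congr rfl h2, sum_comm]
  refine sum_congr rfl fun j hj => ?_
  simp only [mem_filter, mem_Icc] at hj
  rw [sum_congr rfl fun i hi => regCount_sub hk
    ((Nat.le_div_iff_mul_le hj.1.1).1 (mem_Icc.1 hi).2), sum_comm]
  refine sum_congr rfl fun M hM => ?_
  rw [← sum_filter, sum_const, smul_eq_mul]
  congr 1
  have : (Icc 1 (n / j)).filter (fun i => i * j + M ≤ n) = Icc 1 ((n - M) / j) := by
    ext i
    simp only [mem_filter, mem_Icc, Nat.le_div_iff_mul_le hj.1.1]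
    rw [mem_range] at hM
    omega
  rw [this, Nat.card_Icc, Nat.add_sub_cancel]

open Finset in
theorem sum_regDiff_mul {k : ℕ} (hk : 2 ≤ k) (n : ℕ) :
    ∑ M ∈ range (n + 1), regDiff k M * (n - M) = ∑ N ∈ range n, regCount k N := by
  induction n with
  | zero => simp
  | succ n ih =>
    rw [sum_range_succ, Nat.sub_self, mul_zero, add_zero, sum_range_succ (regCount k), ← ih,
      ← sum_regDiff hk n, ← sum_add_distrib]
    refine sum_congr rfl fun M hM => ?_
    rw [mem_range] at hM
    rw [show n + 1 - M = n - M + 1 by omega, mul_add, mul_one]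

/-! ### Growth of the number of `k`-regular partitions -/

open Finset in
/-- The left side counts pairs of a `k`-regular partition of `n` and one of its part sizes; removing
one copy of that part leaves a `k`-regular partition of a smaller number. -/
theorem sum_card_toFinset_le (k n : ℕ) :
    ∑ p : n.Partition with ∀ i ∈ p.parts, ¬ k ∣ i, #p.parts.toFinset
      ≤ ∑ N ∈ range n, regCount k N := by
  have h1 : ∀ p ∈ (univ : Finset n.Partition).filter (fun p => ∀ i ∈ p.parts, ¬ k ∣ i),
      #p.parts.toFinset = ∑ j ∈ Icc 1 n with ¬ k ∣ j, if 1 ≤ p.parts.count j then 1 else 0 := by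
    intro p hp
    simp only [mem_filter, mem_univ, true_and] at hp
    rw [← sum_filter, sum_const, smul_eq_mul, mul_one]
    congr 1
    ext a
    simp only [Multiset.mem_toFinset, mem_filter, mem_Icc, Multiset.one_le_count_iff_mem]
    exact ⟨fun ha => ⟨⟨⟨p.parts_pos ha,
      (Multiset.le_sum_of_mem ha).trans_eq p.parts_sum⟩, hp a ha⟩, ha⟩, fun ha => ha.2⟩
  rw [sum_congr rfl h1, sum_comm]
  have h2 : ∀ j ∈ (Icc 1 n).filter (fun j => ¬ k ∣ j),
      (∑ p : n.Partition with ∀ i ∈ p.parts, ¬ k ∣ i, if 1 ≤ p.parts.count j then 1 else 0)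
        = regCount k (n - j) := by
    intro j hj
    simp only [mem_filter, mem_Icc] at hj
    have := card_count_ge (i := 1) (n := n) hj.2 hj.1.1 (by omega)
    rw [one_mul] at this
    rw [← this, ← sum_filter, filter_filter, sum_const, smul_eq_mul, mul_one]
  rw [sum_congr rfl h2]
  refine (sum_le_sum_of_subset (filter_subset _ _)).trans_eq ?_
  rw [← sum_range_reflect]
  refine sum_bij (fun j _ => j - 1) ?_ ?_ ?_ ?_
  · intro j hj; simp only [mem_Icc, mem_range] at *; omega
  · intro a ha b hb; simp only [mem_Icc] at *; omega
  · intro b hb; exact ⟨b + 1, by simp only [mem_Icc, mem_range] at *; omega, by omega⟩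
  · intro j hj
    rw [mem_Icc] at hj
    congr 1; omega

open Finset in
/-- A partition is determined by its pairs (size, multiplicity), all of which lie in `[0, n]²`. -/
theorem card_few_sizes_le (n s : ℕ) :
    #{p : n.Partition | #p.parts.toFinset < s} ≤ s * (n + 1) ^ (2 * s) := by
  set U := range (n + 1) ×ˢ range (n + 1) with hU
  have hUc : #U = (n + 1) ^ 2 := by rw [hU, card_product, card_range, sq]
  let g : n.Partition → Finset (ℕ × ℕ) := fun p =>
    p.parts.toFinset.image fun a => (a, p.parts.count a)
  have hg : Function.Injective g := by
    intro p q h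
    have key : ∀ p : n.Partition, ∀ a m, (a, m) ∈ g p ↔ a ∈ p.parts ∧ p.parts.count a = m := by
      intro p a m
      simp only [g, mem_image, Multiset.mem_toFinset, Prod.mk.injEq]
      constructor
      · rintro ⟨b, hb, rfl, hm⟩; exact ⟨hb, hm⟩
      · rintro ⟨hb, hm⟩; exact ⟨a, hb, rfl, hm⟩
    apply Nat.Partition.ext
    ext a
    by_cases ha : a ∈ p.parts
    · have := (key p a _).2 ⟨ha, rfl⟩
      rw [h, key] at this
      exact this.2.symm
    · have hb : a ∉ q.parts := by
        intro hb
        have := (key q a _).2 ⟨hb, rfl⟩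
        rw [← h, key] at this
        exact ha this.1
      rw [Multiset.count_eq_zero_of_notMem ha, Multiset.count_eq_zero_of_notMem hb]
  calc #{p : n.Partition | #p.parts.toFinset < s}
      ≤ #((range s).biUnion fun i => U.powersetCard i) := by
        refine card_le_card_of_injOn g (fun p hp => ?_) hg.injOn
        simp only [coe_filter, mem_univ, true_and, Set.mem_ofPred_eq] at hp
        simp only [coe_biUnion, coe_range, Set.mem_Iio, Set.mem_iUnion, mem_coe, mem_powersetCard]
        refine ⟨#(g p), card_image_le.trans_lt hp, ?_, rfl⟩
        intro x hx
        obtain ⟨a, ha, rfl⟩ := mem_image.1 hx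
        rw [Multiset.mem_toFinset] at ha
        have h1 : a ≤ n := (Multiset.le_sum_of_mem ha).trans_eq p.parts_sum
        have h2 : p.parts.count a ≤ n := by
          refine (Multiset.count_le_card _ _).trans ?_
          have := Multiset.card_nsmul_le_sum (s := p.parts) (a := 1) fun x hx => p.parts_pos hx
          rwa [p.parts_sum, smul_eq_mul, mul_one] at this
        simp only [hU, mem_product, mem_range]
        omega
    _ ≤ #(range s) * (n + 1) ^ (2 * s) := by
        refine card_biUnion_le_card_mul _ _ _ fun i hi => ?_
        rw [card_powersetCard, hUc]
        refine (Nat.choose_le_pow _ _).trans ?_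
        rw [← pow_mul]
        rw [mem_range] at hi
        exact Nat.pow_le_pow_right (by omega) (by omega)
    _ = _ := by rw [card_range]

open Finset in
/-- Each subset of the `J` numbers `1 + k, 1 + 2k, …, 1 + Jk` is completed by ones to a `k`-regular
partition of `n`. -/
theorem two_pow_le_regCount {k n J : ℕ} (hk : 2 ≤ k) (h : J * (1 + J * k) ≤ n) :
    2 ^ J ≤ regCount k n := by
  let f : ℕ → ℕ := fun i => 1 + (i + 1) * k
  have hf : Function.Injective f := fun a b hab => by
    simp only [f] at hab
    have := Nat.eq_of_mul_eq_mul_right (by omega : 0 < k) (Nat.add_left_cancel hab)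
    omega
  have hf1 : ∀ i, f i ≠ 1 := fun i => by
    have : 0 < (i + 1) * k := by positivity
    simp only [f]; omega
  have hsum : ∀ S ⊆ range J, (S.val.map f).sum ≤ n := by
    intro S hS
    have h1 : (S.val.map f).sum = ∑ i ∈ S, f i := rfl
    rw [h1]
    refine (sum_le_card_nsmul S f (1 + J * k) fun i hi => ?_).trans ?_
    · have := mem_range.1 (hS hi)
      have := Nat.mul_le_mul_right k (show i + 1 ≤ J by omega)
      simp only [f]; omega
    · refine le_trans ?_ h
      have := card_le_card hS
      rw [card_range] at this
      exact Nat.mul_le_mul_right _ this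
  rw [← card_range J, ← card_powerset]
  unfold regCount
  refine card_le_card_of_injOn (fun S => if hS : S ⊆ range J then
    ⟨S.val.map f + Multiset.replicate (n - (S.val.map f).sum) 1, ?_, ?_⟩
    else Nat.Partition.indiscrete n) ?_ ?_
  · intro a ha
    rcases Multiset.mem_add.1 ha with ha | ha
    · obtain ⟨i, -, rfl⟩ := Multiset.mem_map.1 ha
      simp only [f]; omega
    · rw [Multiset.eq_of_mem_replicate ha]; exact one_pos
  · have := hsum S hS
    rw [Multiset.sum_add, Multiset.sum_replicate, smul_eq_mul]; omega
  · intro S hS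
    rw [mem_coe, mem_powerset] at hS
    simp only [hS, dif_pos, coe_filter, mem_univ, true_and, Set.mem_ofPred_eq]
    intro a ha hka
    have hone : ¬ k ∣ 1 := fun h => by have := Nat.le_of_dvd one_pos h; omega
    rcases Multiset.mem_add.1 ha with ha | ha
    · obtain ⟨i, -, rfl⟩ := Multiset.mem_map.1 ha
      exact hone ((Nat.dvd_add_left (Dvd.intro_left _ rfl)).1 hka)
    · rw [Multiset.eq_of_mem_replicate ha] at hka
      exact hone hka
  · intro S hS S' hS' he
    rw [mem_coe, mem_powerset] at hS hS'
    simp only [hS, hS', dif_pos] at he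
    have he := congrArg (fun p => p.parts.filter (fun a => a ≠ 1)) he
    have key : ∀ (S : Finset ℕ) (N : ℕ), (S.val.map f + Multiset.replicate N 1).filter
        (fun a => a ≠ 1) = S.val.map f := by
      intro S N
      rw [Multiset.filter_add, Multiset.filter_eq_self.2, Multiset.filter_eq_nil.2, add_zero]
      · intro a ha; rw [Multiset.eq_of_mem_replicate ha]; simp
      · intro a ha
        obtain ⟨i, -, rfl⟩ := Multiset.mem_map.1 ha
        exact hf1 i
    simp only [key] at he
    exact Finset.val_injective (Multiset.map_injective hf he)

theorem eventually_poly_le (A e : ℕ) : ∃ J₀ : ℕ, ∀ J ≥ J₀, A * (J + 1) ^ e ≤ 2 ^ J := by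
  have h := tendsto_pow_const_div_const_pow_of_one_lt e (r := (2 : ℝ)) (by norm_num)
  have hε : (0 : ℝ) < 1 / (2 * A + 1) := by positivity
  obtain ⟨J₀, hJ⟩ := Filter.eventually_atTop.1 (h.eventually (gt_mem_nhds hε))
  refine ⟨J₀, fun J hJ' => ?_⟩
  have := hJ (J + 1) (by omega)
  rw [div_lt_div_iff₀ (by positivity) (by positivity), one_mul, pow_succ 2] at this
  have h3 : (0 : ℝ) ≤ ((J + 1 : ℕ) : ℝ) ^ e := by positivity
  have : (A : ℝ) * ((J + 1 : ℕ) : ℝ) ^ e ≤ 2 ^ J := by nlinarith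
  exact_mod_cast this

theorem eventually_few_le {k : ℕ} (hk : 2 ≤ k) (s : ℕ) :
    ∃ n₀ : ℕ, ∀ n ≥ n₀, 2 * (s * (n + 1) ^ (2 * s)) ≤ regCount k n := by
  obtain ⟨J₀, hJ⟩ := eventually_poly_le (2 * (s * (k + 1) ^ (2 * s))) (2 * (2 * s))
  refine ⟨(k + 1) * (J₀ * J₀), fun n hn => ?_⟩
  set J := Nat.sqrt (n / (k + 1)) with hJdef
  have hJ0 : J₀ ≤ J := by
    rw [hJdef, Nat.le_sqrt, Nat.le_div_iff_mul_le (by omega)]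
    linarith
  have hle : (k + 1) * (J * J) ≤ n := by
    have := (Nat.le_div_iff_mul_le (by omega : 0 < k + 1)).1 (Nat.sqrt_le (n / (k + 1)))
    rw [← hJdef] at this
    linarith
  have hlt : n + 1 ≤ (k + 1) * (J + 1) ^ 2 := by
    have := (Nat.div_lt_iff_lt_mul (by omega : 0 < k + 1)).1 (Nat.lt_succ_sqrt (n / (k + 1)))
    rw [← hJdef, Nat.succ_eq_add_one] at this
    linarith
  calc 2 * (s * (n + 1) ^ (2 * s)) ≤ 2 * (s * ((k + 1) * (J + 1) ^ 2) ^ (2 * s)) := by gcongr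
    _ = 2 * (s * (k + 1) ^ (2 * s)) * (J + 1) ^ (2 * (2 * s)) := by
        rw [mul_pow, ← pow_mul]; ring
    _ ≤ 2 ^ J := hJ J hJ0
    _ ≤ regCount k n := two_pow_le_regCount hk (by
        have : J ≤ J * J := Nat.le_mul_self J
        nlinarith)

open Finset in
/-- Only polynomially many partitions have fewer than `s` part sizes, so at least half of the
`k`-regular partitions of `n` have `s` of them or more. -/
theorem eventually_mul_regCount_le {k : ℕ} (hk : 2 ≤ k) (s : ℕ) :
    ∃ n₀ : ℕ, ∀ n ≥ n₀, s * regCount k n ≤ 2 * ∑ N ∈ range n, regCount k N := by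
  obtain ⟨n₀, h⟩ := eventually_few_le hk s
  refine ⟨n₀, fun n hn => ?_⟩
  have h1 := (Nat.mul_le_mul_left 2 (card_few_sizes_le n s)).trans (h n hn)
  have h2 := sum_card_toFinset_le k n
  set R := (univ : Finset n.Partition).filter (fun p => ∀ i ∈ p.parts, ¬ k ∣ i) with hR
  have hRc : #R = regCount k n := rfl
  have h3 : s * #(R.filter fun p => ¬ #p.parts.toFinset < s) ≤ ∑ p ∈ R, #p.parts.toFinset := by
    refine le_trans ?_ (sum_le_sum_of_subset (filter_subset (fun p => ¬ #p.parts.toFinset < s) R))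
    rw [mul_comm, ← smul_eq_mul]
    refine card_nsmul_le_sum _ _ _ fun p hp => ?_
    exact not_lt.1 (mem_filter.1 hp).2
  have h4 := card_filter_add_card_filter_not (s := R) (fun p => #p.parts.toFinset < s)
  have h5 : #(R.filter fun p => #p.parts.toFinset < s)
      ≤ #{p : n.Partition | #p.parts.toFinset < s} :=
    card_le_card (filter_subset_filter _ (subset_univ _))
  rw [hRc] at h4
  have h6 : regCount k n ≤ 2 * #(R.filter fun p => ¬ #p.parts.toFinset < s) := by omega
  have := Nat.mul_le_mul_left s h6
  linarith
/-! ### The positive main term -/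

open Finset in
theorem sum_inv_sq_le (I : ℕ) : ∑ i ∈ range I, 1 / ((i : ℝ) + 1) ^ 2 ≤ π ^ 2 / 6 := by
  have h := hasSum_zeta_two
  have h2 := h.summable.sum_le_tsum (range (I + 1)) (fun i _ => by positivity)
  rw [h.tsum_eq, sum_range_succ'] at h2
  simpa using h2

open Finset in
/-- The bound comes from `1 / j³ ≤ 1 / ((j - 1) * j * (j + 1))` for `j ≥ 2`, which telescopes. -/
theorem sum_inv_cube_le (I : ℕ) : ∑ i ∈ range I, 1 / ((i : ℝ) + 1) ^ 3 ≤ 5 / 4 := by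
  have key : ∀ I : ℕ, ∑ i ∈ range (I + 1), 1 / ((i : ℝ) + 1) ^ 3
      ≤ 5 / 4 - 1 / (2 * ((I : ℝ) + 1) * (I + 2)) := by
    intro I
    induction I with
    | zero => norm_num
    | succ n ih =>
      rw [sum_range_succ]
      have : 1 / (((n + 1 : ℕ) : ℝ) + 1) ^ 3 ≤ 1 / (2 * ((n : ℝ) + 1) * (n + 2))
          - 1 / (2 * (((n + 1 : ℕ) : ℝ) + 1) * ((n + 1 : ℕ) + 2)) := by
        push_cast
        have e : 1 / (2 * ((n : ℝ) + 1) * (n + 2)) - 1 / (2 * ((n : ℝ) + 1 + 1) * (n + 1 + 2))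
          = 1 / ((n + 1) * (n + 2) * (n + 3)) := by field_simp; ring
        rw [e]
        apply one_div_le_one_div_of_le (by positivity)
        have : (0 : ℝ) ≤ n := by positivity
        nlinarith
      linarith
  rcases I with _ | I
  · norm_num
  · have := key I
    have : 0 ≤ 1 / (2 * ((I : ℝ) + 1) * (I + 2)) := by positivity
    linarith

open Finset in
theorem sum_first_le {t : ℝ} (ht : 3 ≤ t) (I : ℕ) :
    ∑ i ∈ range I, (1 / (t * i + t - 1) - 1 / (t * (i + 1)))
      ≤ π ^ 2 / 6 / t ^ 2 + 5 / 4 / (t ^ 2 * (t - 1)) := by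
  have h : ∀ i ∈ range I, (1 / (t * i + t - 1) - 1 / (t * (i + 1)))
      ≤ 1 / t ^ 2 * (1 / ((i : ℝ) + 1) ^ 2) + 1 / (t ^ 2 * (t - 1)) * (1 / ((i : ℝ) + 1) ^ 3) := by
    intro i _
    have hi : (0 : ℝ) ≤ i := by positivity
    have h1 : 0 < t - 1 := by linarith
    have h2 : 0 < t * i + t - 1 := by nlinarith
    have e : 1 / (t * i + t - 1) - 1 / (t * (i + 1))
        = 1 / t ^ 2 * (1 / ((i : ℝ) + 1) ^ 2) +
          1 / (t ^ 2 * (i + 1) ^ 2 * (t * i + t - 1)) := by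
      have h3 : t * i + t - 1 ≠ 0 := h2.ne'
      generalize hw : t * i + t - 1 = w at h3
      obtain rfl : t * (i + 1) - 1 = w := by linarith
      field_simp; ring
    rw [e]
    have : 1 / (t ^ 2 * (i + 1) ^ 2 * (t * i + t - 1))
        ≤ 1 / (t ^ 2 * (t - 1)) * (1 / ((i : ℝ) + 1) ^ 3) := by
      rw [one_div_mul_one_div]
      apply one_div_le_one_div_of_le (by positivity)
      have : (t - 1) * (i + 1) ≤ t * i + t - 1 := by nlinarith
      calc t ^ 2 * (t - 1) * ((i : ℝ) + 1) ^ 3 = t ^ 2 * (i + 1) ^ 2 * ((t - 1) * (i + 1)) := by ring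
        _ ≤ _ := by gcongr
    linarith
  refine (sum_le_sum h).trans ?_
  rw [sum_add_distrib, ← mul_sum, ← mul_sum]
  have h1 : 0 < t - 1 := by linarith
  have a := mul_le_mul_of_nonneg_left (sum_inv_sq_le I) (show 0 ≤ 1 / t ^ 2 by positivity)
  have b := mul_le_mul_of_nonneg_left (sum_inv_cube_le I)
    (show 0 ≤ 1 / (t ^ 2 * (t - 1)) by positivity)
  calc _ ≤ _ := add_le_add a b
    _ = _ := by ring

open Finset in
/-- The term `i = 0` is `1 - 1 / t`; for `i ≥ 1` the terms are at least
`(t - 1) / (t * (t + 1)) * (1 / i - 1 / (i + 1))`, which telescopes. -/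
theorem le_sum_second {t : ℝ} (ht : 3 ≤ t) (I : ℕ) :
    1 - 2 / (t * (t + 1)) - 1 / (I + 1)
      ≤ ∑ i ∈ range (I + 1), (1 / (t * i + 1) - 1 / (t * (i + 1))) := by
  have key : 1 - 1 / t + (t - 1) / (t * (t + 1)) * (1 - 1 / (I + 1))
      ≤ ∑ i ∈ range (I + 1), (1 / (t * i + 1) - 1 / (t * (i + 1))) := by
    induction I with
    | zero => simp
    | succ n ih =>
      rw [sum_range_succ]
      refine le_trans ?_ (add_le_add_left ih _)
      push_cast
      have hn : (0 : ℝ) ≤ n := by positivity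
      have h1 : 0 < t - 1 := by linarith
      have e1 : 1 / (t * (n + 1) + 1) - 1 / (t * (n + 1 + 1))
          = (t - 1) / t * (1 / ((n + 2) * (t * (n + 1) + 1)) )+ 0 := by field_simp; ring
      have e2 : (t - 1) / (t * (t + 1)) * (1 - 1 / (n + 1 + 1))
          = (t - 1) / (t * (t + 1)) * (1 - 1 / (n + 1))
            + (t - 1) / t * (1 / ((t + 1) * ((n + 1) * (n + 2)))) := by field_simp; ring
      rw [e1, e2]
      have : 1 / ((t + 1) * (((n : ℝ) + 1) * (n + 2))) ≤ 1 / ((n + 2) * (t * (n + 1) + 1)) := by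
        apply one_div_le_one_div_of_le (by positivity)
        nlinarith [mul_nonneg hn (show (0 : ℝ) ≤ n + 2 by positivity)]
      have := mul_le_mul_of_nonneg_left this (show 0 ≤ (t - 1) / t by positivity)
      linarith
  refine le_trans ?_ key
  have e : 1 - 1 / t + (t - 1) / (t * (t + 1)) * (1 - 1 / ((I : ℝ) + 1))
    = 1 - 2 / (t * (t + 1)) - (t - 1) / (t * (t + 1)) * (1 / (I + 1)) := by field_simp; ring
  rw [e]
  have : (t - 1) / (t * (t + 1)) ≤ 1 := by
    rw [div_le_one (by positivity)]; nlinarith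
  have := mul_le_mul_of_nonneg_right this (show 0 ≤ 1 / ((I : ℝ) + 1) by positivity)
  linarith

/-- The limiting form of the inequality between the two series; this is where the upper bound on
`k` enters. -/
theorem main_ineq {t k : ℝ} (ht : 3 ≤ t) (hk : 0 < k)
    (h : k * (π ^ 2 / 6 + 5 / (2 * t)) ≤ t ^ 2 - 1) :
    π ^ 2 / 6 / t ^ 2 + 5 / 4 / (t ^ 2 * (t - 1)) < (1 - 2 / (t * (t + 1))) / k := by
  have hpi : π ^ 2 / 6 < 5 / 3 := by nlinarith [Real.pi_lt_d2, Real.pi_pos]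
  have hpi0 : 0 < π ^ 2 / 6 := by positivity
  set z := π ^ 2 / 6
  have h1 : 0 < t - 1 := by linarith
  have hA : 0 < z / t ^ 2 + 5 / 4 / (t ^ 2 * (t - 1)) := by positivity
  have hD : 0 < z + 5 / (2 * t) := by positivity
  rw [lt_div_iff₀ hk]
  have hk' : k ≤ (t ^ 2 - 1) / (z + 5 / (2 * t)) := by rwa [le_div_iff₀ hD]
  refine (mul_le_mul_of_nonneg_left hk' hA.le).trans_lt ?_
  rw [← mul_div_assoc, div_lt_iff₀ hD]
  have e : (1 - 2 / (t * (t + 1))) * (z + 5 / (2 * t))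
      - (z / t ^ 2 + 5 / 4 / (t ^ 2 * (t - 1))) * (t ^ 2 - 1)
      = (5 / 2 * (t - 1) * (t + 2) - z * (t - 1) - 5 / 4 * (t + 1) ^ 2) / (t ^ 2 * (t + 1)) := by
    field_simp; ring
  have : 0 < (5 / 2 * (t - 1) * (t + 2) - z * (t - 1) - 5 / 4 * (t + 1) ^ 2)
      / (t ^ 2 * (t + 1)) := by
    apply div_pos _ (by positivity)
    nlinarith
  linarith

open Finset in
theorem exists_cutoff {t k : ℝ} (ht : 3 ≤ t) (hk : 0 < k)
    (h : k * (π ^ 2 / 6 + 5 / (2 * t)) ≤ t ^ 2 - 1) :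
    ∃ I : ℕ, 0 < I ∧ 0 < (∑ i ∈ range I, (1 / (t * i + 1) - 1 / (t * (i + 1)))) / k
      - ∑ i ∈ range I, (1 / (t * i + t - 1) - 1 / (t * (i + 1))) - 1 / (t * I) := by
  have hm := sub_pos.2 (main_ineq ht hk h)
  set d := (1 - 2 / (t * (t + 1))) / k - (π ^ 2 / 6 / t ^ 2 + 5 / 4 / (t ^ 2 * (t - 1))) with hd
  obtain ⟨I, hI⟩ := exists_nat_one_div_lt (show 0 < d / (1 / k + 1 / t) by positivity)
  refine ⟨I + 1, by omega, ?_⟩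
  rw [lt_div_iff₀ (by positivity)] at hI
  have h1 := sum_first_le ht (I + 1)
  have h2 := div_le_div_of_nonneg_right (le_sum_second ht I) hk.le
  have e : (1 - 2 / (t * (t + 1)) - 1 / ((I : ℝ) + 1)) / k
    = (1 - 2 / (t * (t + 1))) / k - 1 / ((I : ℝ) + 1) * (1 / k) := by ring
  have e2 : 1 / (t * ((I + 1 : ℕ) : ℝ)) = 1 / ((I : ℝ) + 1) * (1 / t) := by
    push_cast; field_simp
  rw [e] at h2
  rw [e2]
  linarith

/-! ### The summatory function of the difference -/

open Finset in
/-- Reindexing of a divisor sum along an increasing enumeration `f` of the positive integers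
satisfying `P`. -/
theorem sum_filter_div_eq {P : ℕ → Prop} [DecidablePred P] {f : ℕ → ℕ} (hf : StrictMono f)
    (hf0 : 0 < f 0) (hP : ∀ j, 0 < j → (P j ↔ ∃ i, f i = j)) {x X : ℕ} (hx : x ≤ X) :
    ∑ j ∈ Icc 1 X with P j, x / j = ∑ i ∈ range X, x / f i := by
  have hlt : ∀ i, i < f i := fun i => by
    induction i with
    | zero => exact hf0
    | succ n ih => have := hf (Nat.lt_succ_self n); simp only [Nat.succ_eq_add_one] at this; omega
  have h1 : (Icc 1 X).filter P = ((range X).filter (fun i => f i ≤ X)).image f := by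
    ext j
    simp only [mem_filter, mem_Icc, mem_image, mem_range]
    constructor
    · rintro ⟨⟨h1, h2⟩, h3⟩
      obtain ⟨i, rfl⟩ := (hP j h1).1 h3
      exact ⟨i, ⟨by have := hlt i; omega, h2⟩, rfl⟩
    · rintro ⟨i, ⟨h1, h2⟩, rfl⟩
      have := hlt i
      exact ⟨⟨by omega, h2⟩, (hP _ (by omega)).2 ⟨i, rfl⟩⟩
  rw [h1, sum_image hf.injective.injOn, sum_filter]
  refine sum_congr rfl fun i _ => ?_
  split_ifs with h
  · rfl
  · exact (Nat.div_eq_of_lt (by omega)).symm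

open Finset in
theorem classSum_add {k t r x X : ℕ} {f g : ℕ → ℕ} (hf : StrictMono f) (hf0 : 0 < f 0)
    (hg : StrictMono g) (hg0 : 0 < g 0)
    (hfr : ∀ j, 0 < j → (j % t = r % t ↔ ∃ i, f i = j))
    (hgr : ∀ j, 0 < j → ((j % t = r % t ∧ k ∣ j) ↔ ∃ i, g i = j)) (hx : x ≤ X) :
    classSum k t r x + ∑ i ∈ range X, x / g i = ∑ i ∈ range X, x / f i := by
  rw [classSum_eq hx, ← sum_filter_div_eq hf hf0 hfr hx, ← sum_filter_div_eq hg hg0 hgr hx,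
    ← filter_filter, ← filter_filter, add_comm]
  exact sum_filter_add_sum_filter_not _ _ _

open Finset in
/-- As `k ≡ -1 (mod t)`, the multiples of `k` that are `≡ 0` are the `k * (t * (i + 1))`, and those
that are `≡ -1` are the `k * (t * i + 1)`. -/
theorem classSum_diff {k t m x X : ℕ} (ht : 2 ≤ t) (hk : 0 < k) (hkm : k + 1 = m * t)
    (hx : x ≤ X) :
    (classSum k t t x : ℝ) - classSum k t (t - 1) x
      = ∑ i ∈ range X, (((x / (k * (t * i + 1)) : ℕ) : ℝ) - ((x / (k * (t * (i + 1))) : ℕ) : ℝ))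
        - ∑ i ∈ range X, (((x / (t * i + t - 1) : ℕ) : ℝ) - ((x / (t * (i + 1)) : ℕ) : ℝ)) := by
  have ht0 : 0 < t := by omega
  have hcop : Nat.Coprime t k := by
    have h1 : Nat.Coprime (k + 1) k := by simp
    rw [hkm] at h1
    exact h1.coprime_mul_left
  have hmono : StrictMono fun i => t * i := fun a b hab => Nat.mul_lt_mul_of_pos_left hab ht0
  have e0 := classSum_add (k := k) (t := t) (r := t) (f := fun i => t * (i + 1))
    (g := fun i => k * (t * (i + 1)))
    (fun a b hab => by have := hmono hab; simp only at this ⊢; linarith) (by simpa using ht0)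
    (fun a b hab => by
      have := hmono hab
      exact Nat.mul_lt_mul_of_pos_left (by simp only at this ⊢; linarith) hk)
    (by simpa using ⟨hk, ht0⟩)
    (by
      intro j hj
      rw [Nat.mod_self, ← Nat.dvd_iff_mod_eq_zero]
      constructor
      · rintro ⟨c, rfl⟩
        have := Nat.pos_of_mul_pos_left hj
        exact ⟨c - 1, by rw [Nat.sub_add_cancel (by omega)]⟩
      · rintro ⟨i, rfl⟩; exact ⟨_, rfl⟩)
    (by
      intro j hj
      rw [Nat.mod_self, ← Nat.dvd_iff_mod_eq_zero]
      constructor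
      · rintro ⟨h1, h2⟩
        obtain ⟨c, rfl⟩ := hcop.mul_dvd_of_dvd_of_dvd h1 h2
        have : 0 < c := Nat.pos_of_mul_pos_left hj
        exact ⟨c - 1, by rw [Nat.sub_add_cancel (by omega)]; ring⟩
      · rintro ⟨i, rfl⟩; exact ⟨⟨k * (i + 1), by ring⟩, ⟨_, rfl⟩⟩) hx
  have e1 := classSum_add (k := k) (t := t) (r := t - 1) (f := fun i => t * i + t - 1)
    (g := fun i => k * (t * i + 1))
    (fun a b hab => by have := hmono hab; simp only at this ⊢; omega) (by omega)
    (fun a b hab => by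
      have := hmono hab
      exact Nat.mul_lt_mul_of_pos_left (by simp only at this ⊢; linarith) hk)
    (by simpa using hk)
    (by
      intro j hj
      rw [Nat.mod_eq_of_lt (by omega : t - 1 < t)]
      constructor
      · intro h
        have := Nat.div_add_mod j t
        exact ⟨j / t, by omega⟩
      · rintro ⟨i, rfl⟩
        rw [Nat.add_sub_assoc (by omega), Nat.mul_add_mod, Nat.mod_eq_of_lt (by omega)])
    (by
      intro j hj
      rw [Nat.mod_eq_of_lt (by omega : t - 1 < t)]
      -- Modulo `t` one has `k ≡ -1`, so `k * c ≡ -1` exactly when `c ≡ 1`.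
      have hiff : ∀ c, (k * c) % t = t - 1 ↔ c % t = 1 := by
        intro c
        have h1 : (k * c + c) % t = 0 := by
          rw [show k * c + c = (k + 1) * c by ring, hkm]
          exact Nat.mod_eq_zero_of_dvd ⟨m * c, by ring⟩
        have ha := Nat.mod_lt (k * c) ht0
        have hb := Nat.mod_lt c ht0
        rw [Nat.add_mod] at h1
        obtain ⟨q, hq⟩ := Nat.dvd_of_mod_eq_zero h1
        have : q < 2 := by
          by_contra hc
          have := Nat.mul_le_mul_left t (not_lt.1 hc)
          omega
        interval_cases q <;> omega
      constructor
      · rintro ⟨h1, c, rfl⟩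
        rw [hiff] at h1
        have := Nat.div_add_mod c t
        exact ⟨c / t, by rw [← h1, this]⟩
      · rintro ⟨i, rfl⟩
        refine ⟨(hiff _).2 ?_, ⟨_, rfl⟩⟩
        rw [Nat.mul_add_mod, Nat.mod_eq_of_lt (by omega)]) hx
  have e0' := congrArg (Nat.cast (R := ℝ)) e0
  have e1' := congrArg (Nat.cast (R := ℝ)) e1
  simp only [Nat.cast_add, Nat.cast_sum] at e0' e1'
  simp only [sum_sub_distrib]
  linarith

open Finset in
/-- Linear lower bound: the first sum in `classSum_diff` has nonnegative terms and is cut at `I`,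
the tail of the second one telescopes, and each of the `2 * I` remaining pairs of floors costs at
most `1`. -/
theorem le_classSum_diff {k t m I : ℕ} (ht : 2 ≤ t) (hk : 0 < k) (hkm : k + 1 = m * t)
    (hI : 0 < I) (x : ℕ) :
    ((∑ i ∈ range I, (1 / ((t : ℝ) * i + 1) - 1 / (t * (i + 1)))) / k
      - ∑ i ∈ range I, (1 / ((t : ℝ) * i + t - 1) - 1 / (t * (i + 1))) - 1 / (t * I)) * x - 2 * I
      ≤ (classSum k t t x : ℝ) - classSum k t (t - 1) x := by
  rw [classSum_diff ht hk hkm (show x ≤ I + x by omega)]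
  have ht0 : 0 < t := by omega
  have h1 : ∑ i ∈ range I, (x / k * (1 / ((t : ℝ) * i + 1) - 1 / (t * (i + 1))) - 1)
      ≤ ∑ i ∈ range (I + x),
        (((x / (k * (t * i + 1)) : ℕ) : ℝ) - ((x / (k * (t * (i + 1))) : ℕ) : ℝ)) := by
    refine le_trans (sum_le_sum fun i _ => ?_)
      (sum_le_sum_of_subset_of_nonneg (range_subset_range.2 (by omega)) fun i _ _ => ?_)
    · have a := Nat.lt_floor_add_one ((x : ℝ) / ((k * (t * i + 1) : ℕ) : ℝ))
      rw [Nat.floor_div_eq_div] at a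
      have b : ((x / (k * (t * (i + 1))) : ℕ) : ℝ) ≤ _ := Nat.cast_div_le
      push_cast at a b ⊢
      have e : (x : ℝ) / k * (1 / ((t : ℝ) * i + 1) - 1 / (t * (i + 1)))
        = x / (k * (t * i + 1)) - x / (k * (t * (i + 1))) := by field_simp
      linarith
    · rw [sub_nonneg, Nat.cast_le]
      exact Nat.div_le_div_left (Nat.mul_le_mul_left _ (by rw [mul_add]; omega)) (by positivity)
  have h2 : ∑ i ∈ range (I + x),
        (((x / (t * i + t - 1) : ℕ) : ℝ) - ((x / (t * (i + 1)) : ℕ) : ℝ))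
      ≤ ∑ i ∈ range I, (x * (1 / ((t : ℝ) * i + t - 1) - 1 / (t * (i + 1))) + 1)
        + x * (1 / (t * I)) := by
    rw [sum_range_add]
    refine add_le_add (sum_le_sum fun i _ => ?_) ?_
    · have a := Nat.lt_floor_add_one ((x : ℝ) / ((t * (i + 1) : ℕ) : ℝ))
      rw [Nat.floor_div_eq_div] at a
      have b : ((x / (t * i + t - 1) : ℕ) : ℝ) ≤ _ := Nat.cast_div_le
      rw [Nat.cast_sub (by omega)] at b
      push_cast at a b ⊢
      have e : (x : ℝ) * (1 / ((t : ℝ) * i + t - 1) - 1 / (t * (i + 1)))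
        = x / (t * i + t - 1) - x / (t * (i + 1)) := by ring
      linarith
    · -- `t * i + t - 1 ≥ t * i`, so the tail is dominated by a telescoping sum.
      calc _ ≤ ∑ i ∈ range x, (((x / (t * (I + i)) : ℕ) : ℝ)
            - ((x / (t * (I + (i + 1))) : ℕ) : ℝ)) := by
            refine sum_le_sum fun i _ => ?_
            rw [← add_assoc]
            refine sub_le_sub_right (Nat.cast_le.2 (Nat.div_le_div_left (by omega) ?_)) _
            positivity
        _ = ((x / (t * I) : ℕ) : ℝ) - ((x / (t * (I + x)) : ℕ) : ℝ) := by
            rw [sum_range_sub' (fun i => ((x / (t * (I + i)) : ℕ) : ℝ)), add_zero]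
        _ ≤ ((x / (t * I) : ℕ) : ℝ) := by
            have : (0 : ℝ) ≤ ((x / (t * (I + x)) : ℕ) : ℝ) := by positivity
            linarith
        _ ≤ x * (1 / (t * I)) := by
            refine Nat.cast_div_le.trans_eq ?_
            push_cast; ring
  rw [sum_sub_distrib, ← mul_sum] at h1
  rw [sum_add_distrib, ← mul_sum] at h2
  simp only [sum_const, card_range, nsmul_eq_mul, mul_one] at h1 h2
  have e : ((∑ i ∈ range I, (1 / ((t : ℝ) * i + 1) - 1 / (t * (i + 1)))) / k
      - ∑ i ∈ range I, (1 / ((t : ℝ) * i + t - 1) - 1 / (t * (i + 1))) - 1 / (t * I)) * x - 2 * I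
    = x / k * (∑ i ∈ range I, (1 / ((t : ℝ) * i + 1) - 1 / (t * (i + 1)))) - I
      - (x * (∑ i ∈ range I, (1 / ((t : ℝ) * i + t - 1) - 1 / (t * (i + 1)))) + I
        + x * (1 / (t * I))) := by ring
  rw [e]
  linarith

/-! ### Conclusion -/

theorem stmt5 (k t m : ℕ) (ht : 2 ≤ t) (hm : 1 ≤ m) (hk2 : 2 ≤ k)
    (hkm : k = m * t - 1)
    (hkub : (k : ℝ) ≤ (π^2/6 + 5/(2*(t : ℝ)))⁻¹ * ((t : ℝ)^2 - 1)) :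
    ∃ N : ℕ, ∀ n ≥ N, Dkx k t t n > Dkx k t (t - 1) n := by
  have hkm' : k + 1 = m * t := by omega
  have ht0 : (0 : ℝ) < t := by positivity
  have hub : (k : ℝ) * (π ^ 2 / 6 + 5 / (2 * t)) ≤ (t : ℝ) ^ 2 - 1 := by
    rwa [inv_mul_eq_div, le_div_iff₀ (by positivity)] at hkub
  have ht3 : 3 ≤ t := by
    -- For `t = 2` the bound forces `k < 2`.
    by_contra hc
    obtain rfl : t = 2 := by omega
    have : (2 : ℝ) ≤ k := by exact_mod_cast hk2
    have := Real.pi_gt_three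
    norm_num at hub
    nlinarith
  obtain ⟨I, hI, hδ⟩ := exists_cutoff (t := t) (k := k) (by exact_mod_cast ht3)
    (by positivity) hub
  have hC := le_classSum_diff (I := I) ht (by omega : 0 < k) hkm' hI
  set δ := (∑ i ∈ Finset.range I, (1 / ((t : ℝ) * i + 1) - 1 / (t * (i + 1)))) / k
      - ∑ i ∈ Finset.range I, (1 / ((t : ℝ) * i + t - 1) - 1 / (t * (i + 1))) - 1 / (t * I)
  obtain ⟨s, hs⟩ := exists_nat_gt (4 * I / δ)
  rw [div_lt_iff₀ hδ] at hs
  obtain ⟨n₀, hn₀⟩ := eventually_mul_regCount_le hk2 s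
  refine ⟨n₀, fun n hn => ?_⟩
  have hpos : (0 : ℝ) < regCount k n := by
    have := two_pow_le_regCount (n := n) (J := 0) hk2 (by omega)
    exact_mod_cast (by omega : 0 < regCount k n)
  have hT : (s : ℝ) * regCount k n ≤ 2 * ∑ N ∈ Finset.range n, (regCount k N : ℝ) := by
    exact_mod_cast hn₀ n hn
  have hsum : δ * ∑ N ∈ Finset.range n, (regCount k N : ℝ) - 2 * I * regCount k n
      ≤ (Dkx k t t n : ℝ) - Dkx k t (t - 1) n := by
    rw [Dkx_eq hk2, Dkx_eq hk2]
    have e1 := congrArg (Nat.cast (R := ℝ)) (sum_regDiff_mul hk2 n)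
    have e2 := congrArg (Nat.cast (R := ℝ)) (sum_regDiff hk2 n)
    simp only [Nat.cast_sum, Nat.cast_mul] at e1 e2 ⊢
    rw [← e1, ← e2, Finset.mul_sum, Finset.mul_sum, ← Finset.sum_sub_distrib,
      ← Finset.sum_sub_distrib]
    refine Finset.sum_le_sum fun M _ => ?_
    have := mul_le_mul_of_nonneg_left (hC (n - M)) (Nat.cast_nonneg (α := ℝ) (regDiff k M))
    linarith
  have : (0 : ℝ) < (Dkx k t t n : ℝ) - Dkx k t (t - 1) n := by nlinarith
  exact_mod_cast sub_pos.1 this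
end

section
/- Let k ≥ 2 be an integer, z a complex number with Re z > 0, q = e^{−z}, and ε = exp(−4π²/(kz)). Then ξ_k(q) = (1/√k) · exp( (π²/(6z))·(1 − 1/k) + (z/24)·(k − 1) ) · P(ε^k)/P(ε), where P(w) = ∏_{n≥1} (1 − wⁿ)^{-1}. -/
/-!
Up to elementary factors, `ξ_k` is a quotient of two values of the Dedekind eta function. With
`F z = ∏ (1 - e^{-(n+1)z})` one has `ξ_k(e^{-z}) = F (k z) / F z` and `P(e^{-z}) = (F z)⁻¹`, while
`η(iz/2π) = e^{-z/24} F z`. The inversion formula `η(-1/τ) = (√I)⁻¹ √τ η(τ)` at `τ = iz/2π` relates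
`F z` to `F (4π²/z)` (`eulerF_inversion`). Applying it at `z` and at `k z` and dividing, the
eighth root of unity cancels and the two square roots contribute `1/√k`
(`sqrt_natCast_mul`).
-/

open scoped Real

/-- The generating function `ξ_k(q) = ∏_{n ≥ 1} (1 - q^{nk})/(1 - q^n)` of
`k`-indivisible partitions. -/
noncomputable def xiK (k : ℕ) (q : ℂ) : ℂ :=
  ∏' n : ℕ, (1 - q ^ ((n + 1) * k)) / (1 - q ^ (n + 1))

/-- The partition generating function `P(q) = ∏_{n ≥ 1} (1 - q^n)⁻¹`. -/
noncomputable def PGF (q : ℂ) : ℂ :=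
  ∏' n : ℕ, (1 - q ^ (n + 1))⁻¹

/-- The Euler product `∏_{n ≥ 1} (1 - e^{-nz})`, as a function of `z` on the right half-plane. -/
noncomputable def eulerF (z : ℂ) : ℂ := ∏' n : ℕ, (1 - Complex.exp (-z) ^ (n + 1))

lemma norm_exp_neg_lt_one {z : ℂ} (hz : 0 < z.re) : ‖Complex.exp (-z)‖ < 1 := by
  simpa [Complex.norm_exp] using hz

lemma multipliable_eulerF {z : ℂ} (hz : 0 < z.re) :
    Multipliable fun n : ℕ ↦ 1 - Complex.exp (-z) ^ (n + 1) :=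
  ModularForm.multipliable_one_sub_pow (norm_exp_neg_lt_one hz)

/-- The nome of the point `τ = iz/2π` of the upper half-plane is `e^{-z}`. -/
lemma eta_q_I_mul (z : ℂ) (n : ℕ) :
    ModularForm.eta_q n (Complex.I * z / (2 * π)) = Complex.exp (-z) ^ (n + 1) := by
  have hpi : (π : ℂ) ≠ 0 := by exact_mod_cast Real.pi_ne_zero
  rw [ModularForm.eta_q_eq_pow]
  congr 2
  field_simp
  rw [Complex.I_sq]
  ring

lemma I_mul_mem_upperHalfPlaneSet {z : ℂ} (hz : 0 < z.re) :
    Complex.I * z / (2 * π) ∈ UpperHalfPlane.upperHalfPlaneSet := by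
  have h : Complex.I * z / (2 * π) = ((2 * π)⁻¹ : ℝ) * (Complex.I * z) := by
    push_cast
    ring
  have hpi := Real.pi_pos
  change 0 < (Complex.I * z / (2 * π)).im
  rw [h, Complex.im_ofReal_mul, Complex.I_mul_im]
  positivity

lemma eulerF_ne_zero {z : ℂ} (hz : 0 < z.re) : eulerF z ≠ 0 := by
  have h := ModularForm.eta_tprod_ne_zero (I_mul_mem_upperHalfPlaneSet hz)
  simp only [eta_q_I_mul] at h
  exact h

lemma eta_I_mul (z : ℂ) :
    ModularForm.eta (Complex.I * z / (2 * π)) = Complex.exp (-z / 24) * eulerF z := by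
  have hpi : (π : ℂ) ≠ 0 := by exact_mod_cast Real.pi_ne_zero
  simp only [ModularForm.eta, eta_q_I_mul, eulerF]
  congr 1
  rw [Function.Periodic.qParam]
  congr 1
  push_cast
  field_simp
  rw [Complex.I_sq]
  ring

/-- The inversion formula of the eta function, in the variable `z` with `τ = iz/2π`. -/
lemma eulerF_inversion {z : ℂ} (hz : 0 < z.re) :
    Complex.exp (-(4 * (π : ℂ) ^ 2 / z) / 24) * eulerF (4 * (π : ℂ) ^ 2 / z) =
      (Complex.sqrt Complex.I)⁻¹ * (Complex.sqrt (Complex.I * z / (2 * π)) *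
        (Complex.exp (-z / 24) * eulerF z)) := by
  have hpi : (π : ℂ) ≠ 0 := by exact_mod_cast Real.pi_ne_zero
  have hz0 : z ≠ 0 := by
    rintro rfl
    simp at hz
  have h := ModularForm.eta_comp_eq_csqrt_I_inv (I_mul_mem_upperHalfPlaneSet hz)
  have harg : -1 / (Complex.I * z / (2 * π)) = Complex.I * (4 * (π : ℂ) ^ 2 / z) / (2 * π) := by
    have hI := Complex.I_ne_zero
    field_simp
    rw [Complex.I_sq]
    ring
  simp only [Function.comp_apply, Pi.smul_apply, Pi.mul_apply, smul_eq_mul] at h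
  rw [harg, eta_I_mul, eta_I_mul] at h
  exact h

lemma re_natCast_mul_pos {k : ℕ} (hk : 0 < k) {z : ℂ} (hz : 0 < z.re) : 0 < ((k : ℂ) * z).re := by
  have : (0 : ℝ) < k := by exact_mod_cast hk
  simpa using mul_pos this hz

lemma re_four_pi_sq_div_pos {z : ℂ} (hz : 0 < z.re) : 0 < (4 * (π : ℂ) ^ 2 / z).re := by
  have h : 4 * (π : ℂ) ^ 2 / z = ((4 * π ^ 2 : ℝ) : ℂ) * z⁻¹ := by
    push_cast
    ring
  have hz0 : z ≠ 0 := by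
    rintro rfl
    simp at hz
  have hn := Complex.normSq_pos.mpr hz0
  rw [h, Complex.re_ofReal_mul, Complex.inv_re]
  have := Real.pi_pos
  positivity

/-- Multiplication by a natural number does not cross the branch cut of the square root. -/
lemma sqrt_natCast_mul (k : ℕ) (w : ℂ) :
    Complex.sqrt ((k : ℂ) * w) = (Real.sqrt k : ℂ) * Complex.sqrt w := by
  have h : (0 : ℝ) ≤ k := k.cast_nonneg
  rcases eq_or_ne w 0 with rfl | hw
  · simp
  rcases k.eq_zero_or_pos with rfl | hk
  · simp
  have hk' : (0 : ℝ) < k := by exact_mod_cast hk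
  have hsqrt : (Real.sqrt k : ℂ) = (k : ℂ) ^ (2⁻¹ : ℂ) := by
    rw [Real.sqrt_eq_rpow, Complex.ofReal_cpow h]
    norm_num
  have hkC : (k : ℂ) ≠ 0 := by exact_mod_cast hk.ne'
  rw [hsqrt, Complex.sqrt, Complex.sqrt, Complex.cpow_def_of_ne_zero (mul_ne_zero hkC hw),
    Complex.cpow_def_of_ne_zero hkC, Complex.cpow_def_of_ne_zero hw, ← Complex.exp_add]
  congr 1
  have := Complex.log_ofReal_mul hk' hw
  rw [Complex.ofReal_natCast, Complex.ofReal_log h, Complex.ofReal_natCast] at this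
  rw [this]
  ring

lemma PGF_exp_neg {z : ℂ} (hz : 0 < z.re) : PGF (Complex.exp (-z)) = (eulerF z)⁻¹ :=
  (multipliable_eulerF hz).tprod_inv₀ (eulerF_ne_zero hz)

lemma xiK_exp_neg {k : ℕ} (hk : 0 < k) {z : ℂ} (hz : 0 < z.re) :
    xiK k (Complex.exp (-z)) = eulerF ((k : ℂ) * z) / eulerF z := by
  have h := (multipliable_eulerF (re_natCast_mul_pos hk hz)).tprod_div₀ (multipliable_eulerF hz)
    (eulerF_ne_zero hz)
  rw [eulerF, eulerF, ← h, xiK]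
  refine tprod_congr fun n ↦ ?_
  rw [neg_mul_eq_mul_neg, Complex.exp_nat_mul, ← pow_mul, mul_comm k]

theorem stmt8 (k : ℕ) (hk : 2 ≤ k) (z : ℂ) (hz : 0 < z.re) :
    xiK k (Complex.exp (-z)) =
      (1 / (Real.sqrt k : ℂ)) *
        Complex.exp ((π : ℂ)^2 / (6 * z) * (1 - 1/(k : ℂ)) + z/24 * ((k : ℂ) - 1)) *
        (PGF (Complex.exp (-(4 * (π : ℂ)^2 / ((k : ℂ) * z))) ^ k) /
          PGF (Complex.exp (-(4 * (π : ℂ)^2 / ((k : ℂ) * z))))) := by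
  have hk0 : 0 < k := by omega
  have hkC : (k : ℂ) ≠ 0 := by exact_mod_cast hk0.ne'
  have hz0 : z ≠ 0 := by
    rintro rfl
    simp at hz
  have hkz := re_natCast_mul_pos hk0 hz
  have hsk : (Real.sqrt k : ℂ) ≠ 0 := by
    exact_mod_cast (Real.sqrt_pos.mpr (by exact_mod_cast hk0)).ne'
  have hpow : Complex.exp (-(4 * (π : ℂ)^2 / ((k : ℂ) * z))) ^ k =
      Complex.exp (-(4 * (π : ℂ)^2 / z)) := by
    rw [← Complex.exp_nat_mul]
    congr 1
    field_simp
  rw [hpow, PGF_exp_neg (re_four_pi_sq_div_pos hz), PGF_exp_neg (re_four_pi_sq_div_pos hkz),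
    xiK_exp_neg hk0 hz]
  have h1 := eulerF_inversion hz
  have h2 := eulerF_inversion hkz
  rw [show Complex.I * (k * z) / (2 * π) = k * (Complex.I * z / (2 * π)) by ring,
    sqrt_natCast_mul] at h2
  have hF := eulerF_ne_zero hz
  have hG1 := eulerF_ne_zero (re_four_pi_sq_div_pos hz)
  have hG2 := eulerF_ne_zero (re_four_pi_sq_div_pos hkz)
  -- The factor common to both inversion formulas, which drops out of the quotient.
  set c := (Complex.sqrt Complex.I)⁻¹ * Complex.sqrt (Complex.I * z / (2 * π)) with hc
  have h1' : Complex.exp (-(4 * (π : ℂ) ^ 2 / z) / 24) * eulerF (4 * (π : ℂ) ^ 2 / z) =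
      c * (Complex.exp (-z / 24) * eulerF z) := by rw [h1, hc]; ring
  have h2' : Complex.exp (-(4 * (π : ℂ) ^ 2 / (k * z)) / 24) * eulerF (4 * (π : ℂ) ^ 2 / (k * z)) =
      c * (Real.sqrt k * (Complex.exp (-(k * z) / 24) * eulerF (k * z))) := by rw [h2, hc]; ring
  have hexp : Complex.exp ((π : ℂ)^2 / (6 * z) * (1 - 1/(k : ℂ)) + z/24 * ((k : ℂ) - 1)) =
      Complex.exp (-(4 * (π : ℂ) ^ 2 / (k * z)) / 24) * Complex.exp (-z / 24) /
        (Complex.exp (-(4 * (π : ℂ) ^ 2 / z) / 24) * Complex.exp (-(k * z) / 24)) := by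
    rw [← Complex.exp_add, ← Complex.exp_add, ← Complex.exp_sub]
    congr 1
    field_simp
    ring
  rw [hexp]
  have e1 := Complex.exp_ne_zero (-(4 * (π : ℂ) ^ 2 / z) / 24)
  have e2 := Complex.exp_ne_zero (-(k * z) / 24)
  generalize Complex.exp (-(4 * (π : ℂ) ^ 2 / z) / 24) = A at *
  generalize Complex.exp (-(4 * (π : ℂ) ^ 2 / (k * z)) / 24) = B at *
  generalize Complex.exp (-z / 24) = C at *
  generalize Complex.exp (-(k * z) / 24) = D at *
  generalize eulerF (4 * (π : ℂ) ^ 2 / z) = G at *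
  generalize eulerF (4 * (π : ℂ) ^ 2 / (k * z)) = G' at *
  generalize eulerF (k * z) = F' at *
  generalize eulerF z = F at *
  clear_value c
  field_simp
  linear_combination (F' * D * (Real.sqrt k : ℂ)) * h1' - (C * F) * h2'
end

section
/- Let x and a be positive real numbers and let k ≥ 2 be an integer. Then k·(ψ(xk + ak) − ψ(xk)) > ψ(x + a) − ψ(x). -/
/-!
The Gauss multiplication formula, differentiated logarithmically, reads
`k ψ(k x) = k log k + ∑_{j<k} ψ(x + j/k)`. Taking the difference of its values at `x + a` and `x`
turns the left-hand side of the claim into `∑_{j<k} (ψ(x + a + j/k) - ψ(x + j/k))`. The term `j = 0`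
is the right-hand side, and the remaining `k - 1 ≥ 1` terms are positive since `ψ` is strictly
increasing.

Only this difference form of the formula is needed (`mul_digamma_sub`), and it follows from
two properties of `ψ`: it is monotone (`log Γ` is convex) and `ψ(x + 1) = ψ(x) + 1/x`. By the latter,
`k ψ(k x) - ∑_{j<k} ψ(x + j/k)` is 1-periodic (`multDefect_add_one`). Both properties together give
`ψ(y + c) - ψ(y) → 0` as `y → ∞`, so the values of this function at `x + a + n` and `x + n` differ by
a quantity tending to `0`. By periodicity, the function is constant.
-/

open scoped Real

/-- The digamma function `ψ(x) = Γ'(x)/Γ(x)`. -/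
noncomputable def digamma (x : ℝ) : ℝ := deriv Real.Gamma x / Real.Gamma x

open Filter Topology Finset

lemma differentiableAt_Gamma_of_pos {x : ℝ} (hx : 0 < x) : DifferentiableAt ℝ Real.Gamma x :=
  Real.differentiableAt_Gamma fun m => by
    have : (0 : ℝ) ≤ m := m.cast_nonneg
    linarith

lemma digamma_eq_deriv_log_Gamma {x : ℝ} (hx : 0 < x) :
    digamma x = deriv (Real.log ∘ Real.Gamma) x := by
  have h := (differentiableAt_Gamma_of_pos hx).hasDerivAt.log (Real.Gamma_pos_of_pos hx).ne'
  exact h.deriv.symm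

lemma digamma_mono {x y : ℝ} (hx : 0 < x) (hxy : x ≤ y) : digamma x ≤ digamma y := by
  have hy : 0 < y := hx.trans_le hxy
  rw [digamma_eq_deriv_log_Gamma hx, digamma_eq_deriv_log_Gamma hy]
  refine Real.convexOn_log_Gamma.monotoneOn_deriv (fun z hz => ?_) hx hy hxy
  exact ((differentiableAt_Gamma_of_pos hz).log (Real.Gamma_pos_of_pos hz).ne')

lemma digamma_add_one {x : ℝ} (hx : 0 < x) : digamma (x + 1) = digamma x + 1 / x := by
  have hG : Real.Gamma x ≠ 0 := (Real.Gamma_pos_of_pos hx).ne'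
  have h1 : HasDerivAt (fun y => Real.Gamma (y + 1)) (deriv Real.Gamma (x + 1)) x :=
    (differentiableAt_Gamma_of_pos (by linarith : 0 < x + 1)).hasDerivAt.comp_add_const x 1
  have h2 : HasDerivAt (fun y => y * Real.Gamma y) (1 * Real.Gamma x + x * deriv Real.Gamma x) x :=
    (hasDerivAt_id x).mul (differentiableAt_Gamma_of_pos hx).hasDerivAt
  have h3 : (fun y => Real.Gamma (y + 1)) =ᶠ[𝓝 x] fun y => y * Real.Gamma y := by
    filter_upwards [lt_mem_nhds hx] with y hy using Real.Gamma_add_one hy.ne'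
  have h4 := h1.unique (h2.congr_of_eventuallyEq h3)
  rw [digamma, digamma, h4, Real.Gamma_add_one hx.ne']
  field_simp
  ring

/-- If two values of `ψ` coincided, the recurrence would make `ψ` decrease strictly between the
points shifted by one. -/
lemma digamma_strictMono {x y : ℝ} (hx : 0 < x) (hxy : x < y) : digamma x < digamma y := by
  have h1 := digamma_mono (by linarith : 0 < x + 1) (by linarith : x + 1 ≤ y + 1)
  rw [digamma_add_one hx, digamma_add_one (hx.trans hxy)] at h1
  have h2 := one_div_lt_one_div_of_lt hx hxy
  linarith

lemma digamma_add_nat {x : ℝ} (hx : 0 < x) (n : ℕ) :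
    digamma (x + n) = digamma x + ∑ j ∈ range n, 1 / (x + j) := by
  induction n with
  | zero => simp
  | succ n ih =>
    rw [sum_range_succ, Nat.cast_succ, ← add_assoc, digamma_add_one (by positivity), ih, add_assoc]

lemma tendsto_digamma_add_sub {c : ℝ} (hc : 0 ≤ c) :
    Tendsto (fun y => digamma (y + c) - digamma y) atTop (𝓝 0) := by
  obtain ⟨N, hN⟩ := exists_nat_ge c
  have hlim : Tendsto (fun y : ℝ => (N : ℝ) * y⁻¹) atTop (𝓝 0) := by
    simpa using tendsto_inv_atTop_zero.const_mul (N : ℝ)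
  refine tendsto_of_tendsto_of_tendsto_of_le_of_le' tendsto_const_nhds hlim ?_ ?_
  · filter_upwards [eventually_gt_atTop 0] with y hy
    exact sub_nonneg.2 (digamma_mono hy (by linarith))
  · filter_upwards [eventually_gt_atTop 0] with y hy
    have h1 := digamma_mono (by linarith : 0 < y + c) (by linarith : y + c ≤ y + N)
    rw [digamma_add_nat hy] at h1
    have h2 : ∑ j ∈ range N, 1 / (y + j) ≤ ∑ _j ∈ range N, y⁻¹ := by
      refine sum_le_sum fun j _ => ?_
      rw [← one_div]
      exact one_div_le_one_div_of_le hy (by linarith [(j.cast_nonneg : (0 : ℝ) ≤ j)])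
    simp only [sum_const, card_range, nsmul_eq_mul] at h2
    linarith

/-- The defect `k ψ(k x) - ∑_{j<k} ψ(x + j/k)` in the multiplication formula, whose actual value
is `k log k`. -/
noncomputable def multDefect (k : ℕ) (x : ℝ) : ℝ :=
  k * digamma (x * k) - ∑ j ∈ range k, digamma (x + j / k)

lemma multDefect_add_one {k : ℕ} (hk : 0 < k) {x : ℝ} (hx : 0 < x) :
    multDefect k (x + 1) = multDefect k x := by
  have hk' : (0 : ℝ) < k := Nat.cast_pos.2 hk
  have h1 : digamma ((x + 1) * k) = digamma (x * k) + ∑ j ∈ range k, 1 / (x * k + j) := by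
    rw [add_one_mul, digamma_add_nat (by positivity)]
  have h2 : ∑ j ∈ range k, digamma (x + 1 + j / k) =
      ∑ j ∈ range k, digamma (x + j / k) + k * ∑ j ∈ range k, 1 / (x * k + j) := by
    rw [mul_sum, ← sum_add_distrib]
    refine sum_congr rfl fun j _ => ?_
    rw [add_right_comm, digamma_add_one (by positivity)]
    congr 1
    field_simp
  rw [multDefect, multDefect, h1, h2]
  ring

lemma multDefect_add_nat {k : ℕ} (hk : 0 < k) {x : ℝ} (hx : 0 < x) (n : ℕ) :
    multDefect k (x + n) = multDefect k x := by
  induction n with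
  | zero => simp
  | succ n ih =>
    rw [Nat.cast_succ, ← add_assoc, multDefect_add_one hk (by positivity), ih]

lemma multDefect_add {k : ℕ} (hk : 0 < k) {x a : ℝ} (hx : 0 < x) (ha : 0 ≤ a) :
    multDefect k (x + a) = multDefect k x := by
  have hk' : (0 : ℝ) < k := Nat.cast_pos.2 hk
  have hshift : ∀ b : ℝ, Tendsto (fun n : ℕ => b + n) atTop atTop := fun b =>
    tendsto_atTop_add_const_left _ b tendsto_natCast_atTop_atTop
  have h1 : Tendsto (fun n : ℕ => (k : ℝ) *
      (digamma ((x + n) * k + a * k) - digamma ((x + n) * k))) atTop (𝓝 (k * 0)) :=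
    ((tendsto_digamma_add_sub (by positivity : 0 ≤ a * k)).comp
      ((hshift x).atTop_mul_const hk')).const_mul _
  have h2 : Tendsto (fun n : ℕ => ∑ j ∈ range k,
      (digamma (x + j / k + n + a) - digamma (x + j / k + n))) atTop (𝓝 (∑ _j ∈ range k, 0)) :=
    tendsto_finsetSum _ fun j _ => (tendsto_digamma_add_sub ha).comp (hshift (x + j / k))
  have h3 := h1.sub h2
  rw [mul_zero, sum_const_zero, sub_zero] at h3
  -- By periodicity the sequence in `h3` is constant.
  have h4 : ∀ n : ℕ, (k : ℝ) * (digamma ((x + n) * k + a * k) - digamma ((x + n) * k)) -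
      ∑ j ∈ range k, (digamma (x + j / k + n + a) - digamma (x + j / k + n)) =
      multDefect k (x + a) - multDefect k x := fun n => by
    rw [← multDefect_add_nat hk (by positivity : 0 < x + a) n, ← multDefect_add_nat hk hx n,
      multDefect, multDefect, sum_sub_distrib]
    have e1 : (x + a + n) * k = (x + n) * k + a * k := by ring
    have e2 : ∀ j : ℕ, x + a + n + (j : ℝ) / k = x + j / k + n + a := fun j => by ring
    have e3 : ∀ j : ℕ, x + n + (j : ℝ) / k = x + j / k + n := fun j => by ring
    simp only [e1, e2, e3]
    ring
  simp only [h4] at h3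
  exact sub_eq_zero.1 (tendsto_nhds_unique tendsto_const_nhds h3)

/-- The multiplication formula for `ψ`, in difference form. -/
lemma mul_digamma_sub {k : ℕ} (hk : 0 < k) {x a : ℝ} (hx : 0 < x) (ha : 0 ≤ a) :
    (k : ℝ) * (digamma (x * k + a * k) - digamma (x * k)) =
      ∑ j ∈ range k, (digamma (x + a + j / k) - digamma (x + j / k)) := by
  have h := multDefect_add hk hx ha
  rw [multDefect, multDefect, add_mul] at h
  rw [sum_sub_distrib]
  linarith

theorem stmt19 (x a : ℝ) (hx : 0 < x) (ha : 0 < a) (k : ℕ) (hk : 2 ≤ k) :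
    (k : ℝ) * (digamma (x * k + a * k) - digamma (x * k)) >
      digamma (x + a) - digamma x := by
  rw [mul_digamma_sub (by omega) hx ha.le]
  have hpos : ∀ j : ℕ, 0 < digamma (x + a + j / k) - digamma (x + j / k) := fun j =>
    sub_pos.2 (digamma_strictMono (by positivity) (by linarith))
  have h := single_lt_sum (f := fun j : ℕ => digamma (x + a + j / k) - digamma (x + j / k))
    (i := 0) (j := 1) one_ne_zero (mem_range.2 (by omega : 0 < k))
    (mem_range.2 (by omega : 1 < k)) (hpos 1)
    fun j _ _ => (hpos j).le
  simpa using h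
end
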